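/- (PAC-Bayes bound) Let Z be a measurable space, D a probability distribution on Z, and ℓ : Θ → Z → [0,1] a jointly measurable loss function on a measurable hypothesis space Θ. For a hypothesis h define the true risk R(h) := E_{z∼D}[ℓ(h, z)] and, for a sample S = (z₁, …, z_N), the empirical risk R̂(h) := (1/N) Σᵢ ℓ(h, zᵢ). Fix a prior probability measure P on Θ and δ ∈ (0,1). Then with probability at least 1 − δ over the draw of an i.i.d. sample S of size N from D, simultaneously for every probability measure Q on Θ: E_{h∼Q}[R(h)] ≤ E_{h∼Q}[R̂(h)] + sqrt( (KL(Q ‖ P) + log(2√N/δ)) / (2N) ). -/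

import Mathlib

open MeasureTheory Real
open scoped Classical

/-- The Kullback–Leibler divergence `KL(Q ‖ P)`, equal to `∫ log (dQ/dP) dQ` when
`Q ≪ P` and the log-likelihood ratio is `Q`-integrable, and `+∞` otherwise. -/
noncomputable def klDiv {α : Type*} [MeasurableSpace α] (Q P : Measure α) : EReal :=
  if Q ≪ P ∧ Integrable (MeasureTheory.llr Q P) Q
  then ((∫ x, MeasureTheory.llr Q P x ∂Q : ℝ) : EReal)
  else ⊤

/-- The weights of the arcsine (Krichevsky-Trofimov) mixture. -/
noncomputable def ktA (k : ℕ) : ℝ := (Nat.centralBinom k : ℝ) / 4 ^ k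

lemma ktA_zero : ktA 0 = 1 := by simp [ktA]

lemma ktA_pos (k : ℕ) : 0 < ktA k := by
  unfold ktA
  have := Nat.centralBinom_pos k
  positivity

lemma ktA_succ (k : ℕ) : ((k : ℝ) + 1) * ktA (k + 1) = (k + 1 / 2) * ktA k := by
  have h : ((k : ℝ) + 1) * (k + 1).centralBinom = 2 * (2 * k + 1) * k.centralBinom := by
    exact_mod_cast Nat.succ_mul_centralBinom_succ k
  unfold ktA
  rw [pow_succ, mul_div_assoc', h]
  field_simp
  ring

lemma ktA_sum (N : ℕ) : ∑ x ∈ Finset.HasAntidiagonal.antidiagonal N, ktA x.1 * ktA x.2 = 1 := by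
  induction N with
  | zero => simp [ktA_zero]
  | succ n ih =>
    have hsw : ∑ x ∈ Finset.HasAntidiagonal.antidiagonal (n + 1), (x.2 : ℝ) * (ktA x.1 * ktA x.2)
        = ∑ x ∈ Finset.HasAntidiagonal.antidiagonal (n + 1), (x.1 : ℝ) * (ktA x.1 * ktA x.2) := by
      rw [← Finset.Nat.sum_antidiagonal_swap]
      refine Finset.sum_congr rfl fun x _ => ?_
      simp [mul_comm]
    have hsw' : ∑ x ∈ Finset.HasAntidiagonal.antidiagonal n, (x.2 : ℝ) * (ktA x.1 * ktA x.2)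
        = ∑ x ∈ Finset.HasAntidiagonal.antidiagonal n, (x.1 : ℝ) * (ktA x.1 * ktA x.2) := by
      rw [← Finset.Nat.sum_antidiagonal_swap]
      refine Finset.sum_congr rfl fun x _ => ?_
      simp [mul_comm]
    have h1 : ∀ m : ℕ, (m : ℝ) * ∑ x ∈ Finset.HasAntidiagonal.antidiagonal m, ktA x.1 * ktA x.2
        = ∑ x ∈ Finset.HasAntidiagonal.antidiagonal m, (x.1 : ℝ) * (ktA x.1 * ktA x.2)
          + ∑ x ∈ Finset.HasAntidiagonal.antidiagonal m, (x.2 : ℝ) * (ktA x.1 * ktA x.2) := by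
      intro m
      rw [Finset.mul_sum, ← Finset.sum_add_distrib]
      refine Finset.sum_congr rfl fun x hx => ?_
      rw [Finset.HasAntidiagonal.mem_antidiagonal] at hx
      rw [← hx]
      push_cast
      ring
    have h2 : ∑ x ∈ Finset.HasAntidiagonal.antidiagonal (n + 1), (x.1 : ℝ) * (ktA x.1 * ktA x.2)
        = ∑ x ∈ Finset.HasAntidiagonal.antidiagonal n, (x.1 : ℝ) * (ktA x.1 * ktA x.2)
          + 1 / 2 * ∑ x ∈ Finset.HasAntidiagonal.antidiagonal n, ktA x.1 * ktA x.2 := by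
      rw [Finset.Nat.sum_antidiagonal_succ, Finset.mul_sum, ← Finset.sum_add_distrib]
      simp only [Nat.cast_zero, zero_mul, zero_add]
      refine Finset.sum_congr rfl fun x _ => ?_
      have := ktA_succ x.1
      push_cast
      linear_combination ktA x.2 * this
    have h3 := h1 (n + 1)
    have h4 := h1 n
    rw [ih] at h4 h2
    rw [hsw] at h3
    rw [hsw'] at h4
    push_cast at h3
    have hn : (n : ℝ) + 1 ≠ 0 := by positivity
    apply mul_left_cancel₀ hn
    linarith

lemma ktA_lower (N : ℕ) (hN : 0 < N) : 1 ≤ 2 * √N * ktA N := by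
  have key : ∀ n : ℕ, 1 ≤ 4 * ((n : ℝ) + 1) * ktA (n + 1) ^ 2 := by
    intro n
    induction n with
    | zero => 
      have := ktA_succ 0
      rw [ktA_zero] at this
      norm_num at this
      norm_num [this]
    | succ n ih =>
      have h := ktA_succ (n + 1)
      push_cast at h ⊢
      have hp := ktA_pos (n + 1)
      have h' : ktA (n + 1 + 1) = ((n : ℝ) + 1 + 1 / 2) * ktA (n + 1) / (n + 1 + 1) := by
        field_simp
        linarith
      refine ih.trans ?_
      rw [h', div_pow, mul_pow, mul_div_assoc', le_div_iff₀ (by positivity)]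
      have : 0 ≤ ktA (n + 1) ^ 2 * (n + 1 + 1) := by positivity
      nlinarith
  obtain ⟨n, rfl⟩ : ∃ n, N = n + 1 := ⟨N - 1, by omega⟩
  have h := key n
  have hp := ktA_pos (n + 1)
  rw [← one_le_sq_iff₀ (by positivity)]
  rw [mul_pow, mul_pow, Real.sq_sqrt (by positivity)]
  push_cast
  linarith

/-- Growth factor exponents. -/
noncomputable def ktL (x : ℝ) : ℝ := (x + 1) * log (x + 1) - x * log x - log (x + 1 / 2)

lemma ktL_mono : MonotoneOn ktL (Set.Ici 0) := by
  have hd : ∀ x : ℝ, 0 < x → HasDerivAt ktL (log (x + 1) - log x - 1 / (x + 1 / 2)) x := by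
    intro x hx
    unfold ktL
    have h1 : HasDerivAt (fun x : ℝ => x + 1) 1 x := (hasDerivAt_id x).add_const 1
    have h2 : HasDerivAt (fun x : ℝ => x + 1 / 2) 1 x := (hasDerivAt_id x).add_const _
    have := ((h1.mul (h1.log (by positivity))).sub
      ((hasDerivAt_id x).mul ((hasDerivAt_id x).log hx.ne'))).sub (h2.log (by positivity))
    refine this.congr_deriv ?_
    simp only [id]
    field_simp
    ring
  apply monotoneOn_of_deriv_nonneg (convex_Ici 0)
  · unfold ktL
    have h0 := Real.continuous_mul_log
    refine ((h0.comp (continuous_id.add continuous_const)).sub h0).continuousOn.sub ?_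
    refine ContinuousOn.log (by fun_prop) ?_
    intro x hx
    have : (0:ℝ) ≤ x := hx
    positivity
  · rw [interior_Ici]
    intro x hx
    exact (hd x hx).differentiableAt.differentiableWithinAt
  · rw [interior_Ici]
    intro x hx
    have hx : 0 < x := hx
    rw [(hd x hx).deriv]
    have h := Real.le_log_one_add_of_nonneg (x := 1 / x) (by positivity)
    rw [← Real.log_div (by positivity) hx.ne']
    have e1 : 1 + 1 / x = (x + 1) / x := by field_simp
    have e2 : 2 * (1 / x) / (1 / x + 2) = 1 / (x + 1 / 2) := by field_simp; ring
    rw [e1, e2] at h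
    linarith

noncomputable def ktR (k : ℕ) : ℝ := (k : ℝ) ^ k / (k.factorial * ktA k)

lemma natpow_exp (k : ℕ) : (k : ℝ) ^ k = exp (k * log k) := by
  rcases Nat.eq_zero_or_pos k with rfl | hk
  · simp
  · have : (0 : ℝ) < k := by exact_mod_cast hk
    rw [mul_comm, Real.exp_mul, Real.exp_log this, Real.rpow_natCast]

lemma ktR_pos (k : ℕ) : 0 < ktR k := by
  unfold ktR
  have := ktA_pos k
  rw [natpow_exp]
  positivity

lemma ktR_succ (k : ℕ) : ktR (k + 1) = ktR k * exp (ktL k) := by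
  unfold ktR
  have hp := ktA_pos k
  have hp' := ktA_pos (k + 1)
  have h := ktA_succ k
  have he : exp (ktL k) = ((k + 1 : ℕ) : ℝ) ^ (k + 1) / (k : ℝ) ^ k / (k + 1 / 2) := by
    unfold ktL
    rw [Real.exp_sub, Real.exp_sub, Real.exp_log (by positivity), natpow_exp, natpow_exp]
    push_cast
    rfl
  have h0 : (k : ℝ) ^ k ≠ 0 := by rw [natpow_exp]; positivity
  have e : (((k + 1).factorial : ℕ) : ℝ) * ktA (k + 1) = k.factorial * ktA k * (k + 1 / 2) := by
    rw [Nat.factorial_succ]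
    push_cast
    linear_combination (k.factorial : ℝ) * h
  rw [he, e]
  have : (k.factorial : ℝ) ≠ 0 := by positivity
  have h2 : (k : ℝ) + 1 / 2 ≠ 0 := by positivity
  field_simp

lemma ktR_mul_le (k m : ℕ) : ktR k * ktR m ≤ ktR (k + m) := by
  induction m with
  | zero => simp [ktR, ktA_zero]
  | succ m ih =>
    rw [← add_assoc, ktR_succ, ktR_succ, ← mul_assoc]
    have h : ktL m ≤ ktL ((k + m : ℕ) : ℝ) := by
      apply ktL_mono
      · simp
      · simp only [Set.mem_Ici]; positivity
      · push_cast; linarith [(Nat.cast_nonneg k : (0:ℝ) ≤ k)]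
    have := ktR_pos (k + m)
    gcongr

lemma choose_term (k m : ℕ) (hN : 0 < k + m) :
    ((k + m).choose k : ℝ) * (((k : ℝ) / (k + m : ℕ)) ^ k * ((m : ℝ) / (k + m : ℕ)) ^ m)
      ≤ 2 * √((k + m : ℕ) : ℝ) * (ktA k * ktA m) := by
  have h1 := ktR_mul_le k m
  have h2 := ktA_lower (k + m) hN
  have hk := ktA_pos k
  have hm := ktA_pos m
  have hn := ktA_pos (k + m)
  have hr := ktR_pos (k + m)
  have e : ((k + m).choose k : ℝ) * (((k : ℝ) / (k + m : ℕ)) ^ k * ((m : ℝ) / (k + m : ℕ)) ^ m)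
      = (ktR k * ktR m) / ktR (k + m) * (ktA k * ktA m / ktA (k + m)) := by
    have hc : ((k + m).choose k : ℝ) = (k + m).factorial / (k.factorial * m.factorial) := by
      rw [Nat.cast_add_choose]
    have hNz : ((k + m : ℕ) : ℝ) ≠ 0 := by positivity
    have f1 : (k.factorial : ℝ) ≠ 0 := by positivity
    have f2 : (m.factorial : ℝ) ≠ 0 := by positivity
    have f3 : ((k + m).factorial : ℝ) ≠ 0 := by positivity
    rw [hc]
    unfold ktR
    generalize ((k + m : ℕ) : ℝ) = n at *
    rw [div_pow, div_pow, pow_add]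
    field_simp
  rw [e]
  calc _ ≤ 1 * (ktA k * ktA m / ktA (k + m)) := by
        gcongr
        exact (div_le_one hr).2 h1
    _ = (ktA k * ktA m) * (1 / ktA (k + m)) := by ring
    _ ≤ (ktA k * ktA m) * (2 * √((k + m : ℕ) : ℝ)) := by
        gcongr
        rw [div_le_iff₀ hn]
        exact h2
    _ = _ := by ring

lemma choose_sum (N : ℕ) (hN : 0 < N) :
    ∑ k ∈ Finset.range (N + 1),
      (N.choose k : ℝ) * (((k : ℝ) / N) ^ k * (1 - (k : ℝ) / N) ^ (N - k)) ≤ 2 * √N := by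
  have hN' : (N : ℝ) ≠ 0 := by positivity
  have := Finset.Nat.sum_antidiagonal_eq_sum_range_succ
    (fun k m => (N.choose k : ℝ) * (((k : ℝ) / N) ^ k * (1 - (k : ℝ) / N) ^ m)) N
  rw [← Nat.succ_eq_add_one, ← this]
  calc _ ≤ ∑ x ∈ Finset.HasAntidiagonal.antidiagonal N, 2 * √N * (ktA x.1 * ktA x.2) := by
        refine Finset.sum_le_sum fun x hx => ?_
        rw [Finset.HasAntidiagonal.mem_antidiagonal] at hx
        have h := choose_term x.1 x.2 (by omega)
        rw [hx] at h
        have e : 1 - (x.1 : ℝ) / N = x.2 / N := by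
          field_simp
          rw [← hx]; push_cast; ring
        rw [e]
        exact h
    _ = _ := by rw [← Finset.mul_sum, ktA_sum, mul_one]

lemma pinsker_aux (a p : ℝ) (hp : 0 < p) (hpa : p ≤ a) (ha : a ≤ 1) :
    a * log p + (1 - a) * log (1 - p) + 2 * (p - a) ^ 2 ≤ a * log a + (1 - a) * log (1 - a) := by
  have hm : MonotoneOn (fun x => a * log x + (1 - a) * log (1 - x) + 2 * (x - a) ^ 2)
      (Set.Icc p a) := by
    have hd : ∀ x ∈ Set.Ioo p a, HasDerivAt
        (fun x => a * log x + (1 - a) * log (1 - x) + 2 * (x - a) ^ 2)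
        (a * (1 / x) + (1 - a) * (-1 / (1 - x)) + 2 * (2 * (x - a))) x := by
      intro x hx
      have h1 : HasDerivAt (fun x : ℝ => 1 - x) (-1) x := by
        simpa using (hasDerivAt_id x).const_sub 1
      have h2 : HasDerivAt (fun x : ℝ => x - a) 1 x := (hasDerivAt_id x).sub_const a
      have := ((((hasDerivAt_id x).log (by simp only [id]; linarith [hx.1])).const_mul a).add
        ((h1.log (by linarith [hx.2])).const_mul (1 - a))).add ((h2.pow 2).const_mul 2)
      refine this.congr_deriv ?_
      simp
    apply monotoneOn_of_deriv_nonneg (convex_Icc p a)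
    · have c1 : ContinuousOn (fun x : ℝ => log x) (Set.Icc p a) :=
        ContinuousOn.log continuousOn_id (fun x hx => (hp.trans_le hx.1).ne')
      have c2 : ContinuousOn (fun x : ℝ => (1 - a) * log (1 - x)) (Set.Icc p a) := by
        rcases eq_or_lt_of_le ha with h | h
        · simp only [h, sub_self, zero_mul]; exact continuousOn_const
        · exact continuousOn_const.mul (ContinuousOn.log (by fun_prop)
            (fun x hx => by linarith [hx.2]))
      exact ((continuousOn_const.mul c1).add c2).add (by fun_prop)
    · rw [interior_Icc]
      intro x hx
      exact (hd x hx).differentiableAt.differentiableWithinAt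
    · rw [interior_Icc]
      intro x hx
      rw [(hd x hx).deriv]
      have x0 : 0 < x := hp.trans hx.1
      have x1 : 0 < 1 - x := by linarith [hx.2]
      have e : a * (1 / x) + (1 - a) * (-1 / (1 - x)) + 2 * (2 * (x - a))
          = (a - x) * (1 - 2 * x) ^ 2 / (x * (1 - x)) := by
        field_simp
        ring
      rw [e]
      have : 0 < a - x := by linarith [hx.2]
      positivity
  have := hm (Set.left_mem_Icc.2 hpa) (Set.right_mem_Icc.2 hpa) hpa
  simpa using this

lemma pinsker (a p : ℝ) (hp : 0 < p) (hp1 : p < 1) (ha0 : 0 ≤ a) (ha : a ≤ 1) :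
    a * log p + (1 - a) * log (1 - p) + 2 * (p - a) ^ 2 ≤ a * log a + (1 - a) * log (1 - a) := by
  rcases le_total p a with h | h
  · exact pinsker_aux a p hp h ha
  · have := pinsker_aux (1 - a) (1 - p) (by linarith) (by linarith) (by linarith)
    simp only [sub_sub_cancel] at this
    nlinarith

lemma pow_exp {x : ℝ} (k : ℕ) (h : 0 < x ∨ (0 ≤ x ∧ k = 0)) : x ^ k = exp (k * log x) := by
  rcases h with h | ⟨_, rfl⟩
  · rw [mul_comm, Real.exp_mul, Real.exp_log h, Real.rpow_natCast]
  · simp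

lemma bern_term (N k : ℕ) (hN : 0 < N) (hk : k ≤ N) (p : ℝ) (hp : 0 ≤ p) (hp1 : p ≤ 1) :
    p ^ k * (1 - p) ^ (N - k) * exp (2 * N * (p - k / N) ^ 2)
      ≤ ((k : ℝ) / N) ^ k * (1 - (k : ℝ) / N) ^ (N - k) := by
  have hN' : (0 : ℝ) < N := by positivity
  have hkN : (k : ℝ) ≤ N := by exact_mod_cast hk
  have ha0 : 0 ≤ (k : ℝ) / N := by positivity
  have ha1 : (k : ℝ) / N ≤ 1 := (div_le_one hN').2 hkN
  have hR : 0 ≤ ((k : ℝ) / N) ^ k * (1 - (k : ℝ) / N) ^ (N - k) :=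
    mul_nonneg (pow_nonneg ha0 _) (pow_nonneg (by linarith) _)
  rcases eq_or_lt_of_le hp with h | hp
  · subst h
    rcases Nat.eq_zero_or_pos k with rfl | hk0
    · simp
    · simpa [hk0.ne'] using hR
  rcases eq_or_lt_of_le hp1 with h | hp1
  · subst h
    rcases eq_or_lt_of_le hk with rfl | hk0
    · simp [hN'.ne']
    · have : N - k ≠ 0 := by omega
      simpa [this] using hR
  have e1 : ((N - k : ℕ) : ℝ) = N * (1 - k / N) := by
    rw [Nat.cast_sub hk]; field_simp
  have e2 : (k : ℝ) = N * (k / N) := by field_simp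
  rw [pow_exp (x := p) k (Or.inl hp), pow_exp (x := 1 - p) (N - k) (Or.inl (by linarith)),
    pow_exp (x := (k : ℝ) / N) k, pow_exp (x := 1 - (k : ℝ) / N) (N - k), ← Real.exp_add,
    ← Real.exp_add, ← Real.exp_add, Real.exp_le_exp, e1]
  · have h := mul_le_mul_of_nonneg_left (pinsker ((k : ℝ) / N) p hp hp1 ha0 ha1) hN'.le
    generalize hq : (k : ℝ) / N = q at *
    rw [e2]
    linarith
  · rcases eq_or_lt_of_le hk with rfl | hk0
    · right; exact ⟨by linarith, by simp⟩
    · left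
      have : (k : ℝ) < N := by exact_mod_cast hk0
      have := (div_lt_one hN').2 this
      linarith
  · rcases Nat.eq_zero_or_pos k with rfl | hk0
    · right; simp
    · left; positivity

/-- Multi-affine interpolation weights on the vertices of the cube. -/
noncomputable def vw {N : ℕ} (x : Fin N → ℝ) (t : Finset (Fin N)) : ℝ :=
  ∏ i, if i ∈ t then x i else 1 - x i

lemma sum_prod_ite {N : ℕ} (f g : Fin N → ℝ) :
    ∑ t : Finset (Fin N), ∏ i, (if i ∈ t then f i else g i) = ∏ i, (f i + g i) := by
  rw [Finset.prod_add, Finset.powerset_univ]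
  refine Finset.sum_congr rfl fun t _ => ?_
  rw [Finset.prod_ite]
  congr 1
  · apply Finset.prod_congr _ (fun _ _ => rfl)
    ext i; simp
  · apply Finset.prod_congr _ (fun _ _ => rfl)
    ext i; simp

lemma vw_sum {N : ℕ} (x : Fin N → ℝ) : ∑ t, vw x t = 1 := by
  unfold vw
  rw [sum_prod_ite]
  simp

lemma vw_sum_mem {N : ℕ} (x : Fin N → ℝ) (i : Fin N) :
    ∑ t, vw x t * (if i ∈ t then 1 else 0) = x i := by
  have h := sum_prod_ite x (fun j => if j = i then 0 else 1 - x j)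
  have e : ∏ j, (x j + if j = i then 0 else 1 - x j) = x i := by
    rw [Finset.prod_eq_single i]
    · simp
    · intro j _ hj; simp [hj]
    · simp
  rw [e] at h
  rw [← h]
  refine Finset.sum_congr rfl fun t _ => ?_
  by_cases hi : i ∈ t
  · simp only [hi, if_true, mul_one, vw]
    refine Finset.prod_congr rfl fun j _ => ?_
    by_cases hj : j = i
    · subst hj; simp [hi]
    · simp [hj]
  · simp only [hi, if_false, mul_zero]
    symm
    exact Finset.prod_eq_zero (Finset.mem_univ i) (by simp [hi])

lemma vw_sum_card {N : ℕ} (x : Fin N → ℝ) : ∑ t, vw x t * (t.card : ℝ) = ∑ i, x i := by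
  simp_rw [← vw_sum_mem x]
  rw [Finset.sum_comm]
  refine Finset.sum_congr rfl fun t _ => ?_
  rw [← Finset.mul_sum]
  simp

lemma vw_nonneg {N : ℕ} (x : Fin N → ℝ) (hx : ∀ i, x i ∈ Set.Icc (0 : ℝ) 1)
    (t : Finset (Fin N)) : 0 ≤ vw x t := by
  refine Finset.prod_nonneg fun i _ => ?_
  split_ifs
  · exact (hx i).1
  · linarith [(hx i).2]

lemma convex_G (c p : ℝ) (hc : 0 ≤ c) : ConvexOn ℝ Set.univ (fun y => exp (c * (p - y) ^ 2)) := by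
  have h2 : ConvexOn ℝ Set.univ (fun y : ℝ => c * (p - y) ^ 2) := by
    refine ⟨convex_univ, fun x _ y _ a b ha hb hab => ?_⟩
    obtain rfl : b = 1 - a := by linarith
    simp only [smul_eq_mul]
    have : 0 ≤ c * (a * (1 - a) * (x - y) ^ 2) := by positivity
    nlinarith
  refine ⟨convex_univ, fun x hx y hy a b ha hb hab => ?_⟩
  exact (Real.exp_le_exp.2 (h2.2 hx hy ha hb hab)).trans
    (convexOn_exp.2 (Set.mem_univ _) (Set.mem_univ _) ha hb hab)

lemma G_le {N : ℕ} (hN : 0 < N) (p : ℝ) (x : Fin N → ℝ) (hx : ∀ i, x i ∈ Set.Icc (0 : ℝ) 1) :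
    exp (2 * N * (p - 1 / (N : ℝ) * ∑ i, x i) ^ 2)
      ≤ ∑ t, vw x t * exp (2 * N * (p - (t.card : ℝ) / N) ^ 2) := by
  have h := (convex_G (2 * N) p (by positivity)).map_sum_le (t := Finset.univ) (w := vw x)
    (p := fun t => (t.card : ℝ) / N) (fun t _ => vw_nonneg x hx t) (vw_sum x)
    (fun _ _ => Set.mem_univ _)
  simp only [smul_eq_mul] at h
  have e : ∑ t, vw x t * ((t.card : ℝ) / N) = 1 / (N : ℝ) * ∑ i, x i := by
    rw [← vw_sum_card, Finset.mul_sum]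
    refine Finset.sum_congr rfl fun t _ => ?_
    ring
  rw [e] at h
  exact h

lemma mgf_bound {Z : Type*} [MeasurableSpace Z] (D : Measure Z) [IsProbabilityMeasure D]
    (f : Z → ℝ) (hf : Measurable f) (hf01 : ∀ z, f z ∈ Set.Icc (0 : ℝ) 1) (N : ℕ) (hN : 0 < N) :
    ∫⁻ S, ENNReal.ofReal (exp (2 * N * ((∫ z, f z ∂D) - 1 / (N : ℝ) * ∑ i, f (S i)) ^ 2))
      ∂(Measure.pi fun _ : Fin N => D) ≤ ENNReal.ofReal (2 * √N) := by
  set p := ∫ z, f z ∂D with hp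
  have hfi : Integrable f D := by
    refine Integrable.of_bound hf.aestronglyMeasurable 1 (Filter.Eventually.of_forall fun z => ?_)
    rw [Real.norm_eq_abs, abs_le]
    constructor <;> linarith [(hf01 z).1, (hf01 z).2]
  have hp0 : 0 ≤ p := integral_nonneg fun z => (hf01 z).1
  have hp1 : p ≤ 1 := by
    have := integral_mono hfi (integrable_const (1 : ℝ)) (fun z => (hf01 z).2)
    simpa using this
  have hvm : ∀ t, Measurable fun S : Fin N → Z => vw (fun i => f (S i)) t := by
    intro t
    unfold vw
    refine Finset.measurable_prod _ fun i _ => ?_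
    split_ifs
    · exact hf.comp (measurable_pi_apply i)
    · exact measurable_const.sub (hf.comp (measurable_pi_apply i))
  have hvi : ∀ t, Integrable (fun S : Fin N → Z => vw (fun i => f (S i)) t)
      (Measure.pi fun _ : Fin N => D) := by
    intro t
    refine Integrable.of_bound (hvm t).aestronglyMeasurable 1
      (Filter.Eventually.of_forall fun S => ?_)
    have h0 := fun t => vw_nonneg (fun i => f (S i)) (fun i => hf01 (S i)) t
    rw [Real.norm_eq_abs, abs_of_nonneg (h0 t), ← vw_sum (fun i => f (S i))]
    exact Finset.single_le_sum (fun t _ => h0 t) (Finset.mem_univ t)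
  have hvint : ∀ t, ∫ S, vw (fun i => f (S i)) t ∂(Measure.pi fun _ : Fin N => D)
      = p ^ t.card * (1 - p) ^ (N - t.card) := by
    intro t
    unfold vw
    have := integral_fintype_prod_eq_prod (𝕜 := ℝ) (μ := fun _ : Fin N => D)
      (fun (i : Fin N) (z : Z) => if i ∈ t then f z else 1 - f z)
    rw [this]
    have e : ∀ i, ∫ z, (if i ∈ t then f z else 1 - f z) ∂D = if i ∈ t then p else 1 - p := by
      intro i
      split_ifs
      · rfl
      · rw [integral_sub (integrable_const _) hfi]
        simp [hp]
    simp_rw [e]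
    rw [Finset.prod_ite]
    simp only [Finset.prod_const]
    congr 2
    · simp
    · rw [Finset.filter_not, Finset.card_sdiff_of_subset (Finset.filter_subset _ _)]
      simp
  have hint : Integrable (fun S : Fin N → Z => ∑ t, vw (fun i => f (S i)) t *
      exp (2 * N * (p - (t.card : ℝ) / N) ^ 2)) (Measure.pi fun _ : Fin N => D) :=
    integrable_finsetSum _ fun t _ => (hvi t).mul_const _
  calc _ ≤ ∫⁻ S : Fin N → Z, ENNReal.ofReal (∑ t, vw (fun i => f (S i)) t *
      exp (2 * N * (p - (t.card : ℝ) / N) ^ 2)) ∂(Measure.pi fun _ : Fin N => D) := by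
        refine lintegral_mono fun S => ENNReal.ofReal_le_ofReal ?_
        exact G_le hN p (fun i => f (S i)) (fun i => hf01 (S i))
    _ = ENNReal.ofReal (∫ S : Fin N → Z, ∑ t, vw (fun i => f (S i)) t *
      exp (2 * N * (p - (t.card : ℝ) / N) ^ 2) ∂(Measure.pi fun _ : Fin N => D)) := by
        rw [ofReal_integral_eq_lintegral_ofReal hint]
        refine Filter.Eventually.of_forall fun S => ?_
        exact Finset.sum_nonneg fun t _ => mul_nonneg
          (vw_nonneg (fun i => f (S i)) (fun i => hf01 (S i)) t) (Real.exp_pos _).le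
    _ ≤ _ := by
        apply ENNReal.ofReal_le_ofReal
        rw [integral_finsetSum _ fun t _ => (hvi t).mul_const _]
        simp_rw [integral_mul_const, hvint]
        rw [← Finset.powerset_univ, Finset.sum_powerset_apply_card
          (fun k => p ^ k * (1 - p) ^ (N - k) * exp (2 * N * (p - (k : ℝ) / N) ^ 2))]
        rw [Finset.card_univ, Fintype.card_fin]
        refine le_trans (Finset.sum_le_sum fun k hk => ?_) (choose_sum N hN)
        rw [nsmul_eq_mul]
        exact mul_le_mul_of_nonneg_left
          (bern_term N k hN (by simpa [Nat.lt_succ_iff] using hk) p hp0 hp1) (Nat.cast_nonneg _)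

lemma donsker {Θ : Type*} [MeasurableSpace Θ] (P Q : Measure Θ) [IsProbabilityMeasure P]
    [IsProbabilityMeasure Q] (hQP : Q ≪ P) (hi : Integrable (llr Q P) Q) (f : Θ → ℝ)
    (hfQ : Integrable f Q) (hfP : Integrable (fun h => exp (f h)) P) :
    ∫ h, f h ∂Q ≤ ∫ h, llr Q P h ∂Q + log (∫ h, exp (f h) ∂P) := by
  have h1 := integral_llr_tilted_right hQP hfQ hfP hi
  have hac : Q ≪ P.tilted f := hQP.trans (absolutelyContinuous_tilted hfP)
  have : IsProbabilityMeasure (P.tilted f) := isProbabilityMeasure_tilted hfP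
  have h2 := InformationTheory.integral_llr_add_sub_measure_univ_nonneg hac
    (integrable_llr_tilted_right hQP hfQ hi hfP)
  simp at h2
  linarith

/-- **PAC-Bayes bound.** For a data distribution `D` on `Z`, a `[0,1]`-valued jointly
measurable loss `ℓ`, a prior `P` on the hypothesis space `Θ` and `δ ∈ (0,1)`, with
probability at least `1 − δ` over an i.i.d. sample `S` of size `N` from `D`,
simultaneously for every posterior probability measure `Q` on `Θ` (with the inequality
interpreted as trivially true when `KL(Q ‖ P) = ∞`):
`E_{h∼Q}[R(h)] ≤ E_{h∼Q}[R̂_S(h)] + √((KL(Q‖P) + log(2√N/δ)) / (2N))`. -/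
theorem pac_bayes_bound
    {Z : Type*} [MeasurableSpace Z] {Θ : Type*} [MeasurableSpace Θ]
    (D : Measure Z) [IsProbabilityMeasure D]
    (ℓ : Θ → Z → ℝ) (hℓmeas : Measurable fun p : Θ × Z => ℓ p.1 p.2)
    (hℓ01 : ∀ h z, ℓ h z ∈ Set.Icc (0 : ℝ) 1)
    (P : Measure Θ) [IsProbabilityMeasure P]
    (δ : ℝ) (hδ : δ ∈ Set.Ioo (0 : ℝ) 1)
    (N : ℕ) (hN : 0 < N) :
    ENNReal.ofReal (1 - δ) ≤
      (Measure.pi fun _ : Fin N => D)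
        {S : Fin N → Z | ∀ Q : Measure Θ, IsProbabilityMeasure Q → klDiv Q P ≠ ⊤ →
          ∫ h, (∫ z, ℓ h z ∂D) ∂Q ≤
            (∫ h, (1 / (N : ℝ)) * ∑ i : Fin N, ℓ h (S i) ∂Q) +
              Real.sqrt (((klDiv Q P).toReal +
                Real.log (2 * Real.sqrt N / δ)) / (2 * N))} := by
  set R : Θ → ℝ := fun h => ∫ z, ℓ h z ∂D with hR
  set Δ : (Fin N → Z) → Θ → ℝ := fun S h => R h - 1 / (N : ℝ) * ∑ i, ℓ h (S i) with hΔ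
  have hN' : (0 : ℝ) < N := by exact_mod_cast hN
  have hδ0 : 0 < δ := hδ.1
  have hRm : Measurable R := by
    have : StronglyMeasurable (fun p : Θ × Z => ℓ p.1 p.2) := hℓmeas.stronglyMeasurable
    exact this.integral_prod_right.measurable
  have hℓh : ∀ h, Measurable (ℓ h) := fun h => hℓmeas.comp measurable_prodMk_left
  have hR01 : ∀ h, R h ∈ Set.Icc (0 : ℝ) 1 := by
    intro h
    refine ⟨integral_nonneg fun z => (hℓ01 h z).1, ?_⟩
    have hi : Integrable (ℓ h) D := by
      refine Integrable.of_bound (hℓh h).aestronglyMeasurable 1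
        (Filter.Eventually.of_forall fun z => ?_)
      rw [Real.norm_eq_abs, abs_le]
      constructor <;> linarith [(hℓ01 h z).1, (hℓ01 h z).2]
    have := integral_mono hi (integrable_const (1 : ℝ)) (fun z => (hℓ01 h z).2)
    simpa using this
  have hE01 : ∀ (S : Fin N → Z) h, 1 / (N : ℝ) * ∑ i, ℓ h (S i) ∈ Set.Icc (0 : ℝ) 1 := by
    intro S h
    constructor
    · exact mul_nonneg (by positivity) (Finset.sum_nonneg fun i _ => (hℓ01 h (S i)).1)
    · have : ∑ i, ℓ h (S i) ≤ ∑ i : Fin N, (1 : ℝ) :=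
        Finset.sum_le_sum fun i _ => (hℓ01 h (S i)).2
      simp at this
      rw [one_div, inv_mul_le_iff₀ hN']
      linarith
  have hEm2 : Measurable fun q : (Fin N → Z) × Θ => 1 / (N : ℝ) * ∑ i, ℓ q.2 (q.1 i) := by
    refine Measurable.const_mul (Finset.measurable_sum _ fun i _ => ?_) _
    exact hℓmeas.comp (measurable_snd.prodMk ((measurable_pi_apply i).comp measurable_fst))
  have hΔm2 : Measurable fun q : (Fin N → Z) × Θ => Δ q.1 q.2 :=
    (hRm.comp measurable_snd).sub hEm2
  have hΔm : ∀ S, Measurable (Δ S) := fun S => hΔm2.comp measurable_prodMk_left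
  have hEm : ∀ S : Fin N → Z, Measurable fun h => 1 / (N : ℝ) * ∑ i, ℓ h (S i) :=
    fun S => hEm2.comp measurable_prodMk_left
  have hΔ1 : ∀ S h, |Δ S h| ≤ 1 := by
    intro S h
    rw [abs_le]
    have h1 := hR01 h
    have h2 := hE01 S h
    constructor <;> simp only [hΔ] <;> linarith [h1.1, h1.2, h2.1, h2.2]
  have hgm2 : Measurable fun q : (Fin N → Z) × Θ =>
      ENNReal.ofReal (exp (2 * N * (Δ q.1 q.2) ^ 2)) := by fun_prop
  set F : (Fin N → Z) → ENNReal := fun S =>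
    ∫⁻ h, ENNReal.ofReal (exp (2 * N * (Δ S h) ^ 2)) ∂P with hF
  have hFm : Measurable F := hgm2.lintegral_prod_right'
  have hFint : ∫⁻ S, F S ∂(Measure.pi fun _ : Fin N => D) ≤ ENNReal.ofReal (2 * √N) := by
    simp only [hF]
    rw [lintegral_lintegral_swap hgm2.aemeasurable]
    calc _ ≤ ∫⁻ _ : Θ, ENNReal.ofReal (2 * √N) ∂P :=
          lintegral_mono fun h => mgf_bound D (ℓ h) (hℓh h) (hℓ01 h) N hN
      _ = _ := by simp
  have hsN : 0 < √(N : ℝ) := Real.sqrt_pos.2 hN'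
  set c : ℝ := 2 * √N / δ with hc
  have hcpos : 0 < c := by positivity
  have hbad : (Measure.pi fun _ : Fin N => D) {S | ENNReal.ofReal c ≤ F S}
      ≤ ENNReal.ofReal δ := by
    have h := (mul_meas_ge_le_lintegral hFm (ENNReal.ofReal c)
      (μ := Measure.pi fun _ : Fin N => D)).trans hFint
    have e : ENNReal.ofReal (2 * √N) = ENNReal.ofReal c * ENNReal.ofReal δ := by
      rw [← ENNReal.ofReal_mul hcpos.le, hc]
      congr 1
      field_simp
    rw [e] at h
    exact (ENNReal.mul_le_mul_iff_right (by simpa using hcpos) ENNReal.ofReal_ne_top).1 h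
  have hgood : ENNReal.ofReal (1 - δ) ≤
      (Measure.pi fun _ : Fin N => D) {S | ENNReal.ofReal c ≤ F S}ᶜ := by
    rw [prob_compl_eq_one_sub (measurableSet_le measurable_const hFm),
      ENNReal.ofReal_sub _ hδ0.le, ENNReal.ofReal_one]
    exact tsub_le_tsub_left hbad 1
  refine hgood.trans (measure_mono ?_)
  intro S hS Q hQ hKL
  have hS : F S < ENNReal.ofReal c := by simpa using hS
  have hcond : Q ≪ P ∧ Integrable (MeasureTheory.llr Q P) Q := by
    by_contra hcon
    exact hKL (by simp [klDiv, hcon])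
  have hKLe : (klDiv Q P).toReal = ∫ x, llr Q P x ∂Q := by
    simp [klDiv, hcond]
  rw [hKLe]
  have hsq : ∀ h, (Δ S h) ^ 2 ≤ 1 := fun h => by
    rw [sq_le_one_iff_abs_le_one]; exact hΔ1 S h
  have hΔi : Integrable (Δ S) Q := Integrable.of_bound (hΔm S).aestronglyMeasurable 1
    (Filter.Eventually.of_forall fun h => hΔ1 S h)
  have hΔ2i : Integrable (fun h => (Δ S h) ^ 2) Q :=
    Integrable.of_bound ((hΔm S).pow_const 2).aestronglyMeasurable 1
    (Filter.Eventually.of_forall fun h => by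
      rw [Real.norm_eq_abs, abs_of_nonneg (sq_nonneg _)]; exact hsq h)
  have hexpi : Integrable (fun h => exp (2 * N * (Δ S h) ^ 2)) P := by
    refine Integrable.of_bound (Measurable.aestronglyMeasurable ?_) (exp (2 * N * 1))
      (Filter.Eventually.of_forall fun h => ?_)
    · have := hΔm S
      fun_prop
    · rw [Real.norm_eq_abs, abs_of_pos (Real.exp_pos _)]
      gcongr
      exact hsq h
  have hdv := donsker P Q hcond.1 hcond.2 (fun h => 2 * N * (Δ S h) ^ 2)
    (hΔ2i.const_mul _) hexpi
  have hpos : 0 < ∫ h, exp (2 * N * (Δ S h) ^ 2) ∂P := integral_exp_pos hexpi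
  have hle : ∫ h, exp (2 * N * (Δ S h) ^ 2) ∂P ≤ c := by
    have : ENNReal.ofReal (∫ h, exp (2 * N * (Δ S h) ^ 2) ∂P) = F S :=
      ofReal_integral_eq_lintegral_ofReal hexpi
        (Filter.Eventually.of_forall fun h => (Real.exp_pos _).le)
    rw [← this] at hS
    exact ((ENNReal.ofReal_lt_ofReal_iff hcpos).1 hS).le
  have hlog := Real.log_le_log hpos hle
  rw [integral_const_mul] at hdv
  have hjen : (∫ h, Δ S h ∂Q) ^ 2 ≤ ∫ h, (Δ S h) ^ 2 ∂Q := by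
    have h0 : 0 ≤ ∫ h, (Δ S h - ∫ h, Δ S h ∂Q) ^ 2 ∂Q := integral_nonneg fun h => sq_nonneg _
    set m := ∫ h, Δ S h ∂Q with hm
    have e : ∫ h, (Δ S h - m) ^ 2 ∂Q = (∫ h, (Δ S h) ^ 2 ∂Q) - m ^ 2 := by
      have : ∀ h, (Δ S h - m) ^ 2 = (Δ S h) ^ 2 - 2 * m * Δ S h + m ^ 2 := fun h => by ring
      simp_rw [this]
      have hi1 : Integrable (fun h => (Δ S h) ^ 2 - 2 * m * Δ S h) Q :=
        hΔ2i.sub (hΔi.const_mul _)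
      rw [integral_add hi1 (integrable_const _),
        integral_sub hΔ2i (hΔi.const_mul _), integral_const_mul, ← hm]
      simp
      ring
    linarith
  have hRi : Integrable R Q := Integrable.of_bound hRm.aestronglyMeasurable 1
    (Filter.Eventually.of_forall fun h => by
      rw [Real.norm_eq_abs, abs_of_nonneg (hR01 h).1]; exact (hR01 h).2)
  have hEi : Integrable (fun h => 1 / (N : ℝ) * ∑ i, ℓ h (S i)) Q :=
    Integrable.of_bound (hEm S).aestronglyMeasurable 1
    (Filter.Eventually.of_forall fun h => by
      rw [Real.norm_eq_abs, abs_of_nonneg (hE01 S h).1]; exact (hE01 S h).2)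
  have hsub : ∫ h, Δ S h ∂Q = ∫ h, R h ∂Q - ∫ h, 1 / (N : ℝ) * ∑ i, ℓ h (S i) ∂Q :=
    integral_sub hRi hEi
  have hfin : ∫ h, Δ S h ∂Q ≤ √((∫ x, llr Q P x ∂Q + log c) / (2 * N)) := by
    apply Real.le_sqrt_of_sq_le
    rw [le_div_iff₀ (by positivity)]
    nlinarith
  linarith
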